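/- arXiv:1309.2513 — 3 statements merged into one kernel-verified Lean document; each statement's English description precedes it below -/
import Mathlib

section
/- Assume {T_w : w ∈ S_n} is a basis of B_n, let w₀ be the longest element of S_n, and let λ : B_n → F be the F-linear functional determined by λ(T_w) = δ_{w,w₀}. Then every nonzero left ideal I of B_n contains an element b with λ(b) ≠ 0; that is, ker λ contains no nonzero left ideal of B_n, so B_n is a Frobenius algebra with trace map λ (equivalently, the bilinear form (a, b) ↦ λ(ab) on B_n is nondegenerate). -/
open scoped TensorProduct

namespace HeckeLikeTower

variable (F : Type*) [Field F]

/-- The defining relations of the Hecke-like algebra of degree `n` over `F` with parameters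
`c, d`.  The generators `T_1, …, T_{n-1}` are indexed by `Fin (n-1)`, where the index
`i : Fin (n-1)` corresponds to the generator `T_{i+1}`. -/
inductive Rel (c d : F) (n : ℕ) :
    FreeAlgebra F (Fin (n - 1)) → FreeAlgebra F (Fin (n - 1)) → Prop
  | comm (i j : Fin (n - 1)) (h : (i : ℕ) + 1 < (j : ℕ)) :
      Rel c d n (FreeAlgebra.ι F i * FreeAlgebra.ι F j)
        (FreeAlgebra.ι F j * FreeAlgebra.ι F i)
  | braid (i j : Fin (n - 1)) (h : (j : ℕ) = (i : ℕ) + 1) :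
      Rel c d n (FreeAlgebra.ι F i * FreeAlgebra.ι F j * FreeAlgebra.ι F i)
        (FreeAlgebra.ι F j * FreeAlgebra.ι F i * FreeAlgebra.ι F j)
  | quad (i : Fin (n - 1)) :
      Rel c d n (FreeAlgebra.ι F i * FreeAlgebra.ι F i)
        (c • FreeAlgebra.ι F i + algebraMap F (FreeAlgebra F (Fin (n - 1))) d)

/-- The Hecke-like algebra `B_n` of degree `n` over `F` with parameters `c, d`: the quotient
of the free associative unital `F`-algebra on `T_1, …, T_{n-1}` by the two-sided ideal
generated by the relations. -/
abbrev B (c d : F) (n : ℕ) : Type _ := RingQuot (Rel F c d n)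

/-- The generator `T_{i+1}` of the Hecke-like algebra `B_n` (for `i : Fin (n-1)`). -/
def T (c d : F) (n : ℕ) (i : Fin (n - 1)) : B F c d n :=
  RingQuot.mkAlgHom F (Rel F c d n) (FreeAlgebra.ι F i)

/-- The adjacent transposition `s_{i+1} = (i+1, i+2) ∈ S_n` (for `i : Fin (n-1)`), acting on
`Fin n` by swapping `i` and `i+1` (`0`-based). -/
def s (n : ℕ) (i : Fin (n - 1)) : Equiv.Perm (Fin n) :=
  Equiv.swap ⟨(i : ℕ), lt_of_lt_of_le i.isLt (Nat.sub_le n 1)⟩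
    ⟨(i : ℕ) + 1, by have := i.isLt; omega⟩

/-- The product in `S_n` of the adjacent transpositions along a word. -/
def wordProd (n : ℕ) (l : List (Fin (n - 1))) : Equiv.Perm (Fin n) :=
  (l.map (s n)).prod

/-- The product `T_{i_1} ⋯ T_{i_r}` in `B_n` along a word `(i_1, …, i_r)`. -/
def Tword (c d : F) (n : ℕ) (l : List (Fin (n - 1))) : B F c d n :=
  (l.map (T F c d n)).prod

/-- `l` is a reduced word for the permutation `w ∈ S_n`: the corresponding product of
adjacent transpositions is `w`, and `l` has minimal length among all such words (its length
is then the Coxeter length `ℓ(w)`). -/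
def IsReducedWord (n : ℕ) (w : Equiv.Perm (Fin n)) (l : List (Fin (n - 1))) : Prop :=
  wordProd n l = w ∧
    ∀ l' : List (Fin (n - 1)), wordProd n l' = w → l.length ≤ l'.length

/-- The Coxeter length `ℓ(w)` of `w ∈ S_n` with respect to the adjacent transpositions. -/
noncomputable def len (n : ℕ) (w : Equiv.Perm (Fin n)) : ℕ :=
  sInf {r | ∃ l : List (Fin (n - 1)), wordProd n l = w ∧ l.length = r}

end HeckeLikeTower

open HeckeLikeTower

/-! The formulas for left multiplication by the generators `T_i` in terms of the `T_w` define
operators on functions on `S_n`. These operators satisfy the defining relations, so `B_n` acts on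
functions on `S_n`, and since the `T_w` span `B_n`, acting on the coordinate vector of `1` recovers
the coordinates of an element of `B_n`; in particular `λ` is the coordinate at `w₀`.

Let `I` be a left ideal. If some `b ∈ I` has a nonzero coordinate at `w` and `s_i w` is longer
than `w`, then `b` or `T_i b` has a nonzero coordinate at `s_i w`. A longest permutation at which
some element of `I` has a nonzero coordinate thus has no left ascent, and only `w₀` has none. -/

namespace HeckeLikeTower

section Permutations

variable {n : ℕ}

/-- The smaller of the two points exchanged by `s n i`. -/
def lower (i : Fin (n - 1)) : Fin n := ⟨i, by omega⟩

/-- The larger of the two points exchanged by `s n i`. -/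
def upper (i : Fin (n - 1)) : Fin n := ⟨i + 1, by omega⟩

lemma lower_lt_upper (i : Fin (n - 1)) : lower i < upper i := Nat.lt_succ_self i

lemma s_eq_swap (i : Fin (n - 1)) : s n i = Equiv.swap (lower i) (upper i) := rfl

lemma s_inv (i : Fin (n - 1)) : (s n i)⁻¹ = s n i := Equiv.swap_inv _ _

lemma s_mul_s_mul (i : Fin (n - 1)) (w : Equiv.Perm (Fin n)) : s n i * (s n i * w) = w :=
  Equiv.swap_mul_self_mul _ _ w

lemma s_mul_eq_iff (i : Fin (n - 1)) {v w : Equiv.Perm (Fin n)} :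
    s n i * v = w ↔ v = s n i * w := by
  rw [← eq_inv_mul_iff_mul_eq, s_inv]

lemma s_lower (i : Fin (n - 1)) : s n i (lower i) = upper i := Equiv.swap_apply_left _ _

lemma s_upper (i : Fin (n - 1)) : s n i (upper i) = lower i := Equiv.swap_apply_right _ _

lemma s_apply_of_ne_of_ne {i : Fin (n - 1)} {k : Fin n} (hl : k ≠ lower i) (hu : k ≠ upper i) :
    s n i k = k := Equiv.swap_apply_of_ne_of_ne hl hu

lemma s_lt_s (i : Fin (n - 1)) {a b : Fin n} (hab : a < b)
    (h : ¬ (a = lower i ∧ b = upper i)) : s n i a < s n i b := by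
  simp only [s_eq_swap, Equiv.swap_apply_def, lower, upper, Fin.lt_def, Fin.ext_iff,
    apply_ite Fin.val] at *
  split_ifs <;> omega

lemma s_comm {i j : Fin (n - 1)} (h : (i : ℕ) + 1 < j) : s n i * s n j = s n j * s n i := by
  have hnodup : [lower i, upper i, lower j, upper j].Nodup := by
    simp only [List.nodup_cons, List.mem_cons, List.not_mem_nil, List.nodup_nil, lower, upper,
      Fin.mk.injEq, or_false, not_false_eq_true, and_true]
    omega
  exact (Equiv.Perm.disjoint_swap_swap hnodup).commute

lemma s_braid {i j : Fin (n - 1)} (h : upper i = lower j) :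
    s n i * s n j * s n i = s n j * s n i * s n j := by
  have hij : lower i < lower j := h ▸ lower_lt_upper i
  have hj : lower j < upper j := lower_lt_upper j
  rw [s_eq_swap, s_eq_swap, h, Equiv.swap_mul_swap_mul_swap hij.ne (hij.trans hj).ne,
    Equiv.swap_comm (lower i), Equiv.swap_comm (lower j) (upper j),
    Equiv.swap_mul_swap_mul_swap hj.ne' (hij.trans hj).ne', Equiv.swap_comm]

/-- The adjacent transposition `s n i` is a left ascent of `w`: multiplying `w` by it on the left
creates an inversion. -/
def IsLeftAscent (i : Fin (n - 1)) (w : Equiv.Perm (Fin n)) : Prop :=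
  w⁻¹ (lower i) < w⁻¹ (upper i)

instance (i : Fin (n - 1)) (w : Equiv.Perm (Fin n)) : Decidable (IsLeftAscent i w) :=
  inferInstanceAs (Decidable (_ < _))

lemma s_mul_inv_apply (i : Fin (n - 1)) (w : Equiv.Perm (Fin n)) (k : Fin n) :
    (s n i * w)⁻¹ k = w⁻¹ (s n i k) := by
  rw [mul_inv_rev, s_inv, Equiv.Perm.mul_apply]

lemma not_isLeftAscent_iff (i : Fin (n - 1)) (w : Equiv.Perm (Fin n)) :
    ¬ IsLeftAscent i w ↔ w⁻¹ (upper i) < w⁻¹ (lower i) :=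
  not_lt.trans (w⁻¹.injective.ne (lower_lt_upper i).ne').le_iff_lt

lemma isLeftAscent_s_mul (i : Fin (n - 1)) (w : Equiv.Perm (Fin n)) :
    IsLeftAscent i (s n i * w) ↔ ¬ IsLeftAscent i w := by
  rw [not_isLeftAscent_iff, IsLeftAscent, s_mul_inv_apply, s_mul_inv_apply, s_lower, s_upper]

lemma isLeftAscent_s_mul_of_far {i j : Fin (n - 1)} (h : (i : ℕ) + 1 < j ∨ (j : ℕ) + 1 < i)
    (w : Equiv.Perm (Fin n)) : IsLeftAscent i (s n j * w) ↔ IsLeftAscent i w := by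
  have hl : s n j (lower i) = lower i := by
    apply s_apply_of_ne_of_ne <;> simp only [ne_eq, lower, upper, Fin.ext_iff] <;> omega
  have hu : s n j (upper i) = upper i := by
    apply s_apply_of_ne_of_ne <;> simp only [ne_eq, lower, upper, Fin.ext_iff] <;> omega
  rw [IsLeftAscent, s_mul_inv_apply, s_mul_inv_apply, hl, hu, IsLeftAscent]

lemma eq_revPerm_of_forall_not_isLeftAscent {w : Equiv.Perm (Fin n)}
    (h : ∀ i, ¬ IsLeftAscent i w) : w = Fin.revPerm := by
  cases n with
  | zero => exact Subsingleton.elim _ _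
  | succ m =>
    have hanti : StrictAnti ⇑w⁻¹ :=
      Fin.strictAnti_iff_succ_lt.2 fun i => (not_isLeftAscent_iff _ _).1 (h i)
    have hrev : ⇑w⁻¹ ∘ Fin.rev = id :=
      ((hanti.comp Fin.rev_strictAnti).range_inj strictMono_id).1
        (by simp [Set.range_comp, Fin.rev_surjective.range_eq])
    refine Equiv.ext fun k => (Equiv.Perm.inv_eq_iff_eq.1 ?_).symm
    exact congrFun hrev k

end Permutations

section ReducedWords

variable {n : ℕ}

lemma wordProd_cons (i : Fin (n - 1)) (l : List (Fin (n - 1))) :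
    wordProd n (i :: l) = s n i * wordProd n l := rfl

lemma exists_shorter_word_swap_mul (l : List (Fin (n - 1))) {a b : Fin n} (hab : a < b)
    (hinv : (wordProd n l)⁻¹ b < (wordProd n l)⁻¹ a) :
    ∃ l' : List (Fin (n - 1)),
      wordProd n l' = Equiv.swap a b * wordProd n l ∧ l'.length < l.length := by
  induction l generalizing a b with
  | nil => exact absurd hinv hab.asymm
  | cons j l ih =>
    by_cases hj : a = lower j ∧ b = upper j
    · refine ⟨l, ?_, Nat.lt_succ_self _⟩
      rw [hj.1, hj.2, ← s_eq_swap, wordProd_cons, s_mul_s_mul]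
    · rw [wordProd_cons, s_mul_inv_apply, s_mul_inv_apply] at hinv
      obtain ⟨l', hprod, hlen⟩ := ih (s_lt_s j hab hj) hinv
      refine ⟨j :: l', ?_, Nat.succ_lt_succ hlen⟩
      rw [wordProd_cons, wordProd_cons, hprod, Equiv.swap_apply_apply, s_inv]
      simp only [mul_assoc, s_mul_s_mul]

lemma exists_shorter_word_s_mul {i : Fin (n - 1)} {l : List (Fin (n - 1))}
    (h : ¬ IsLeftAscent i (wordProd n l)) :
    ∃ l' : List (Fin (n - 1)), wordProd n l' = s n i * wordProd n l ∧ l'.length < l.length :=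
  exists_shorter_word_swap_mul l (lower_lt_upper i) ((not_isLeftAscent_iff _ _).1 h)

lemma len_wordProd_le (l : List (Fin (n - 1))) : len n (wordProd n l) ≤ l.length :=
  Nat.sInf_le ⟨l, rfl, rfl⟩

namespace IsReducedWord

variable {w : Equiv.Perm (Fin n)} {i : Fin (n - 1)} {l : List (Fin (n - 1))}

lemma len_eq (h : IsReducedWord n w l) : len n w = l.length := by
  refine le_antisymm (h.1 ▸ len_wordProd_le l) (le_csInf ⟨_, l, h.1, rfl⟩ ?_)
  rintro _ ⟨l', hl', rfl⟩
  exact h.2 l' hl'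

lemma of_cons (h : IsReducedWord n w (i :: l)) : IsReducedWord n (wordProd n l) l := by
  refine ⟨rfl, fun l' hl' => Nat.le_of_succ_le_succ (h.2 (i :: l') ?_)⟩
  rw [wordProd_cons, hl', ← wordProd_cons, h.1]

lemma isLeftAscent_of_cons (h : IsReducedWord n w (i :: l)) : IsLeftAscent i (wordProd n l) := by
  by_contra hdesc
  obtain ⟨l', hprod, hlen⟩ := exists_shorter_word_s_mul hdesc
  exact (h.2 l' (hprod.trans h.1)).not_gt (hlen.trans (Nat.lt_succ_self _))

lemma len_lt_len_s_mul (hl : IsReducedWord n (s n i * w) l) (h : IsLeftAscent i w) :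
    len n w < len n (s n i * w) := by
  have hdesc : ¬ IsLeftAscent i (wordProd n l) := by
    rwa [hl.1, isLeftAscent_s_mul, not_not]
  obtain ⟨l', hprod, hlen⟩ := exists_shorter_word_s_mul hdesc
  rw [hl.1, s_mul_s_mul] at hprod
  calc len n w = len n (wordProd n l') := by rw [hprod]
    _ ≤ l'.length := len_wordProd_le l'
    _ < l.length := hlen
    _ = len n (s n i * w) := hl.len_eq.symm

end IsReducedWord

end ReducedWords

section LeftMultiplication

variable {R : Type*} [CommRing R] (c d : R) {n : ℕ}

/-- Left multiplication by the generator `T_i` in the coordinates `f w` of `∑ w, f w • T_w`: it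
sends `T_v` to `T_{s_i v}` if `i` is a left ascent of `v`, and to `c T_v + d T_{s_i v}` if not. -/
def mulT (i : Fin (n - 1)) : Module.End R (Equiv.Perm (Fin n) → R) where
  toFun f w := if IsLeftAscent i w then d * f (s n i * w) else f (s n i * w) + c * f w
  map_add' f g := by
    funext w
    simp only [Pi.add_apply]
    split_ifs <;> ring
  map_smul' a f := by
    funext w
    simp only [Pi.smul_apply, smul_eq_mul, RingHom.id_apply]
    split_ifs <;> ring

lemma mulT_apply (i : Fin (n - 1)) (f : Equiv.Perm (Fin n) → R) (w : Equiv.Perm (Fin n)) :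
    mulT c d i f w =
      if IsLeftAscent i w then d * f (s n i * w) else f (s n i * w) + c * f w := rfl

lemma mulT_of_isLeftAscent {i : Fin (n - 1)} {w : Equiv.Perm (Fin n)} (h : IsLeftAscent i w)
    (f : Equiv.Perm (Fin n) → R) : mulT c d i f w = d * f (s n i * w) :=
  if_pos h

lemma mulT_of_not_isLeftAscent {i : Fin (n - 1)} {w : Equiv.Perm (Fin n)}
    (h : ¬ IsLeftAscent i w) (f : Equiv.Perm (Fin n) → R) :
    mulT c d i f w = f (s n i * w) + c * f w :=
  if_neg h

lemma mulT_mul_self (i : Fin (n - 1)) :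
    mulT c d i * mulT c d i = c • mulT c d i + algebraMap R _ d := by
  refine LinearMap.ext fun f => funext fun w => ?_
  by_cases h : IsLeftAscent i w <;>
  simp only [Module.End.mul_apply, mulT_of_isLeftAscent, mulT_of_not_isLeftAscent, h,
    not_true_eq_false, not_false_eq_true, isLeftAscent_s_mul, s_mul_s_mul, LinearMap.add_apply,
    LinearMap.smul_apply, Pi.add_apply, Pi.smul_apply, smul_eq_mul,
    Module.algebraMap_end_apply] <;> ring

lemma mulT_comm {i j : Fin (n - 1)} (h : (i : ℕ) + 1 < j) :
    mulT c d i * mulT c d j = mulT c d j * mulT c d i := by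
  refine LinearMap.ext fun f => funext fun w => ?_
  have hi : IsLeftAscent i (s n j * w) ↔ IsLeftAscent i w :=
    isLeftAscent_s_mul_of_far (.inl h) w
  have hj : IsLeftAscent j (s n i * w) ↔ IsLeftAscent j w :=
    isLeftAscent_s_mul_of_far (.inr h) w
  have hs : s n j * (s n i * w) = s n i * (s n j * w) := by
    rw [← mul_assoc, ← mul_assoc, s_comm h]
  by_cases hiw : IsLeftAscent i w <;> by_cases hjw : IsLeftAscent j w <;>
  simp only [Module.End.mul_apply, mulT_of_isLeftAscent, mulT_of_not_isLeftAscent, hi, hj, hs,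
    hiw, hjw, not_false_eq_true] <;> ring

lemma mulT_braid {i j : Fin (n - 1)} (h : upper i = lower j) :
    mulT c d i * mulT c d j * mulT c d i = mulT c d j * mulT c d i * mulT c d j := by
  refine LinearMap.ext fun f => funext fun w => ?_
  have hij : lower i < lower j := h ▸ lower_lt_upper i
  have hj : lower j < upper j := lower_lt_upper j
  have hi_mid : s n i (lower j) = lower i := h ▸ s_upper i
  have hi_upper : s n i (upper j) = upper j :=
    s_apply_of_ne_of_ne (hij.trans hj).ne' (h ▸ hj.ne')
  have hj_lower : s n j (lower i) = lower i := s_apply_of_ne_of_ne hij.ne (hij.trans hj).ne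
  have hbraid : s n i * (s n j * (s n i * w)) = s n j * (s n i * (s n j * w)) := by
    simpa only [mul_assoc] using congrArg (· * w) (s_braid h)
  -- The terms on both sides depend only on the relative order of `w⁻¹ (lower i)`, `w⁻¹ (lower j)`
  -- and `w⁻¹ (upper j)`.
  rcases lt_or_gt_of_ne (w⁻¹.injective.ne hij.ne) with h₁ | h₁ <;>
  rcases lt_or_gt_of_ne (w⁻¹.injective.ne hj.ne) with h₂ | h₂ <;>
  rcases lt_or_gt_of_ne (w⁻¹.injective.ne (hij.trans hj).ne) with h₃ | h₃ <;>
  first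
  | exact absurd (h₁.trans h₂) h₃.asymm
  | exact absurd (h₂.trans h₁) h₃.asymm
  | (simp only [Module.End.mul_apply, mulT_apply, IsLeftAscent, s_mul_inv_apply, h, hi_mid,
      hi_upper, hj_lower, s_lower, s_upper, s_mul_s_mul, hbraid, h₁, h₂, h₃, h₁.asymm,
      h₂.asymm, h₃.asymm, if_true, if_false]
     try ring)

lemma mulT_single {i : Fin (n - 1)} {w : Equiv.Perm (Fin n)} (h : IsLeftAscent i w) :
    mulT c d i (Pi.single w 1) = Pi.single (s n i * w) 1 := by
  funext v
  by_cases hv : IsLeftAscent i v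
  · have hne : v ≠ s n i * w := by
      rintro rfl
      exact (isLeftAscent_s_mul i w).1 hv h
    rw [mulT_of_isLeftAscent c d hv]
    simp [s_mul_eq_iff, hne]
  · have hne : v ≠ w := by
      rintro rfl
      exact hv h
    rw [mulT_of_not_isLeftAscent c d hv]
    simp [Pi.single_apply, s_mul_eq_iff, hne]

end LeftMultiplication

section RegularRepresentation

variable {F : Type*} [Field F] (c d : F) {n : ℕ}

/-- The left regular representation of `B_n`, in the coordinates of the family `T_w`. -/
def regularRep : B F c d n →ₐ[F] Module.End F (Equiv.Perm (Fin n) → F) :=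
  RingQuot.liftAlgHom F ⟨FreeAlgebra.lift F (mulT c d), by
    rintro _ _ (⟨i, j, h⟩ | ⟨i, j, h⟩ | i)
    · simpa using mulT_comm c d h
    · simpa using mulT_braid c d (Fin.ext h.symm)
    · simpa using mulT_mul_self c d i⟩

/-- The coordinates of an element of `B_n` with respect to the family `T_w`, read off from its
action on the coordinate vector of `T_1 = 1`. -/
def coeff : B F c d n →ₗ[F] Equiv.Perm (Fin n) → F :=
  LinearMap.applyₗ (Pi.single 1 1) ∘ₗ (regularRep c d).toLinearMap

variable {c d}

lemma coeff_T_mul (i : Fin (n - 1)) (b : B F c d n) :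
    coeff c d (T F c d n i * b) = mulT c d i (coeff c d b) := by
  simp [coeff, regularRep, T]

lemma IsReducedWord.coeff_Tword {w : Equiv.Perm (Fin n)} {l : List (Fin (n - 1))}
    (h : IsReducedWord n w l) : coeff c d (Tword F c d n l) = Pi.single w 1 := by
  induction l generalizing w with
  | nil => simp [← h.1, Tword, wordProd, coeff]
  | cons i l ih =>
    rw [← h.1, wordProd_cons, ← mulT_single c d h.isLeftAscent_of_cons, ← ih h.of_cons,
      ← coeff_T_mul]
    rfl

lemma sum_coeff_smul_Tword {word : Equiv.Perm (Fin n) → List (Fin (n - 1))}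
    (hword : ∀ w, IsReducedWord n w (word w))
    (hspan : Submodule.span F
      (Set.range (fun w : Equiv.Perm (Fin n) => Tword F c d n (word w))) = ⊤)
    (b : B F c d n) : ∑ w, coeff c d b w • Tword F c d n (word w) = b := by
  have hid : Fintype.linearCombination F (fun w => Tword F c d n (word w)) ∘ₗ coeff c d =
      LinearMap.id :=
    LinearMap.ext_on_range hspan fun w => by
      simp [(hword w).coeff_Tword, Fintype.linearCombination_apply_single]
  exact LinearMap.congr_fun hid b

lemma exists_coeff_s_mul_ne_zero {I : Submodule (B F c d n) (B F c d n)} {i : Fin (n - 1)}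
    {w : Equiv.Perm (Fin n)} (h : IsLeftAscent i w) (hw : ∃ b ∈ I, coeff c d b w ≠ 0) :
    ∃ b ∈ I, coeff c d b (s n i * w) ≠ 0 := by
  obtain ⟨b, hb, hbw⟩ := hw
  by_cases hsw : coeff c d b (s n i * w) = 0
  · refine ⟨T F c d n i * b, I.smul_mem _ hb, ?_⟩
    have hdesc : ¬ IsLeftAscent i (s n i * w) := by rwa [isLeftAscent_s_mul, not_not]
    rwa [coeff_T_mul, mulT_of_not_isLeftAscent c d hdesc, s_mul_s_mul, hsw, mul_zero, add_zero]
  · exact ⟨b, hb, hsw⟩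

end RegularRepresentation

end HeckeLikeTower

theorem heckeLike_frobenius_general (F : Type*) [Field F] (c d : F) (n : ℕ)
    (word : Equiv.Perm (Fin n) → List (Fin (n - 1)))
    (hword : ∀ w, IsReducedWord n w (word w))
    (hspan : Submodule.span F
      (Set.range (fun w : Equiv.Perm (Fin n) => Tword F c d n (word w))) = ⊤)
    (w₀ : Equiv.Perm (Fin n)) (hw₀ : ∀ w, len n w ≤ len n w₀)
    (lam : B F c d n →ₗ[F] F)
    (hlam : ∀ w : Equiv.Perm (Fin n),
      lam (Tword F c d n (word w)) = if w = w₀ then 1 else 0) :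
    ∀ I : Submodule (B F c d n) (B F c d n), I ≠ ⊥ → ∃ b ∈ I, lam b ≠ 0 := by
  intro I hI
  have hlt : ∀ i w, IsLeftAscent i w → len n w < len n (s n i * w) :=
    fun i w => (hword (s n i * w)).len_lt_len_s_mul
  have hlam_eq (b : B F c d n) : lam b = coeff c d b w₀ := by
    simpa [hlam] using congrArg lam (sum_coeff_smul_Tword hword hspan b).symm
  obtain ⟨x, hxI, hx⟩ := Submodule.exists_mem_ne_zero_of_ne_bot hI
  obtain ⟨v, hv⟩ : ∃ v, coeff c d x v ≠ 0 := by
    by_contra! h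
    exact hx (by simpa [h] using (sum_coeff_smul_Tword hword hspan x).symm)
  obtain ⟨w, hw, hmax⟩ := Set.exists_max_image {w | ∃ b ∈ I, coeff c d b w ≠ 0} (len n)
    (Set.toFinite _) ⟨v, x, hxI, hv⟩
  have hw_eq : w = Fin.revPerm := eq_revPerm_of_forall_not_isLeftAscent fun i hi =>
    (hlt i w hi).not_ge (hmax _ (exists_coeff_s_mul_ne_zero hi hw))
  have hw₀_eq : w₀ = Fin.revPerm := eq_revPerm_of_forall_not_isLeftAscent fun i hi =>
    (hlt i w₀ hi).not_ge (hw₀ _)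
  simpa only [hlam_eq, hw₀_eq, ← hw_eq, Set.mem_ofPred_eq] using hw

/-- assume `{T_w : w ∈ S_n}` is a basis of `B_n`, let `w₀` be the longest
element of `S_n` and let `λ : B_n → F` be the linear functional with `λ(T_w) = δ_{w,w₀}`.
Then every nonzero left ideal of `B_n` contains an element `b` with `λ(b) ≠ 0`, i.e.
`ker λ` contains no nonzero left ideal, so `B_n` is Frobenius with trace map `λ`. -/
theorem heckeLike_frobenius (F : Type*) [Field F] (c d : F) (n : ℕ) (hn : 0 < n)
    (word : Equiv.Perm (Fin n) → List (Fin (n - 1)))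
    (hword : ∀ w, IsReducedWord n w (word w))
    (hindep : LinearIndependent F (fun w : Equiv.Perm (Fin n) => Tword F c d n (word w)))
    (hspan : Submodule.span F
      (Set.range (fun w : Equiv.Perm (Fin n) => Tword F c d n (word w))) = ⊤)
    (w₀ : Equiv.Perm (Fin n)) (hw₀ : ∀ w, len n w ≤ len n w₀)
    (lam : B F c d n →ₗ[F] F)
    (hlam : ∀ w : Equiv.Perm (Fin n),
      lam (Tword F c d n (word w)) = if w = w₀ then 1 else 0) :
    ∀ I : Submodule (B F c d n) (B F c d n), I ≠ ⊥ → ∃ b ∈ I, lam b ≠ 0 :=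
  heckeLike_frobenius_general F c d n word hword hspan w₀ hw₀ lam hlam
end

section
/- Suppose n ≥ 2 and let 1 ≤ i ≤ n−1. Then the generator T_i is a unit in B_n if and only if d ≠ 0. Moreover, if d ≠ 0 then T_i⁻¹ = d⁻¹(T_i − c), while if d = 0 then T_i is a nonzero zero divisor in B_n. -/
open scoped TensorProduct

open HeckeLikeTower

/-!
The quadratic relation says `T_i (T_i - c) = d = (T_i - c) T_i`. Dividing by `d` inverts `T_i` when
`d ≠ 0`, and `T_i - c` annihilates `T_i` on both sides when `d = 0`. To see that neither factor
vanishes, send every generator to the root `ω` of `X² - cX - d` in `F[X]/(X² - cX - d)`: the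
commutation and braid relations become trivial, and `ω` is not a scalar.
-/

namespace HeckeLikeTower

section QuadraticRelation

variable {R A : Type*} [CommSemiring R] [Ring A] [Algebra R A] {c d : R} {x : A}

theorem mul_sub_algebraMap_of_mul_self_eq (hx : x * x = c • x + algebraMap R A d) :
    x * (x - algebraMap R A c) = algebraMap R A d := by
  rw [mul_sub, hx, ← Algebra.commutes, ← Algebra.smul_def, add_sub_cancel_left]

theorem sub_algebraMap_mul_of_mul_self_eq (hx : x * x = c • x + algebraMap R A d) :
    (x - algebraMap R A c) * x = algebraMap R A d := by
  rw [sub_mul, hx, ← Algebra.smul_def, add_sub_cancel_left]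

end QuadraticRelation

section QuadraticRelationOverField

variable {K A : Type*} [Semifield K] [Ring A] [Algebra K A] {c d : K} {x : A}

theorem mul_inv_smul_sub_algebraMap_of_mul_self_eq
    (hx : x * x = c • x + algebraMap K A d) (hd : d ≠ 0) :
    x * (d⁻¹ • (x - algebraMap K A c)) = 1 := by
  rw [mul_smul_comm, mul_sub_algebraMap_of_mul_self_eq hx, Algebra.algebraMap_eq_smul_one,
    inv_smul_smul₀ hd]

theorem inv_smul_sub_algebraMap_mul_of_mul_self_eq
    (hx : x * x = c • x + algebraMap K A d) (hd : d ≠ 0) :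
    (d⁻¹ • (x - algebraMap K A c)) * x = 1 := by
  rw [smul_mul_assoc, sub_algebraMap_mul_of_mul_self_eq hx, Algebra.algebraMap_eq_smul_one,
    inv_smul_smul₀ hd]

theorem isUnit_iff_of_mul_self_eq (hx : x * x = c • x + algebraMap K A d)
    (hxc : x ≠ algebraMap K A c) : IsUnit x ↔ d ≠ 0 := by
  constructor
  · rintro hunit rfl
    have hzero : x * (x - algebraMap K A c) = 0 := by
      rw [mul_sub_algebraMap_of_mul_self_eq hx, map_zero]
    exact sub_ne_zero.mpr hxc (hunit.mul_right_eq_zero.mp hzero)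
  · intro hd
    exact isUnit_iff_exists.mpr
      ⟨_, mul_inv_smul_sub_algebraMap_of_mul_self_eq hx hd,
        inv_smul_sub_algebraMap_mul_of_mul_self_eq hx hd⟩

end QuadraticRelationOverField

section Lift

variable {F A : Type*} [Field F] [Semiring A] [Algebra F A] {c d : F} {n : ℕ}

/-- The universal property of the Hecke-like algebra: a family in an `F`-algebra that satisfies the
defining relations extends to an algebra homomorphism out of `B_n`. As in `Rel`, the commutation
and braid relations are only required for `i < j`. -/
def lift (x : Fin (n - 1) → A)
    (hcomm : ∀ i j : Fin (n - 1), (i : ℕ) + 1 < j → x i * x j = x j * x i)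
    (hbraid : ∀ i j : Fin (n - 1), (j : ℕ) = i + 1 → x i * x j * x i = x j * x i * x j)
    (hquad : ∀ i, x i * x i = c • x i + algebraMap F A d) :
    B F c d n →ₐ[F] A :=
  RingQuot.liftAlgHom F ⟨FreeAlgebra.lift F x, by
    intro _ _ hrel
    cases hrel with
    | comm i j h => simpa using hcomm i j h
    | braid i j h => simpa using hbraid i j h
    | quad i => simpa using hquad i⟩

@[simp]
theorem lift_T (x : Fin (n - 1) → A)
    (hcomm : ∀ i j : Fin (n - 1), (i : ℕ) + 1 < j → x i * x j = x j * x i)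
    (hbraid : ∀ i j : Fin (n - 1), (j : ℕ) = i + 1 → x i * x j * x i = x j * x i * x j)
    (hquad : ∀ i, x i * x i = c • x i + algebraMap F A d) (i : Fin (n - 1)) :
    lift x hcomm hbraid hquad (T F c d n i) = x i := by
  simp [lift, T]

end Lift

section Generators

open scoped QuadraticAlgebra

variable {F : Type*} [Field F] {c d : F} {n : ℕ}

theorem T_mul_self (i : Fin (n - 1)) :
    T F c d n i * T F c d n i = c • T F c d n i + algebraMap F (B F c d n) d := by
  simpa only [T, map_mul, map_add, map_smul, AlgHom.commutes] using
    RingQuot.mkAlgHom_rel F (Rel.quad (c := c) (d := d) i)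

variable (F c d n) in
/-- The representation of the Hecke-like algebra on `F[X]/(X² - cX - d)` in which every generator
acts as the class `ω` of `X`. -/
def toQuadraticAlgebra : B F c d n →ₐ[F] QuadraticAlgebra F d c :=
  lift (fun _ ↦ ω) (fun _ _ _ ↦ rfl) (fun _ _ _ ↦ rfl) fun _ ↦ by
    rw [QuadraticAlgebra.omega_mul_omega_eq_add, Algebra.algebraMap_eq_smul_one, add_comm]

@[simp]
theorem toQuadraticAlgebra_T (i : Fin (n - 1)) :
    toQuadraticAlgebra F c d n (T F c d n i) = ω :=
  lift_T ..

theorem T_ne_algebraMap (i : Fin (n - 1)) (a : F) :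
    T F c d n i ≠ algebraMap F (B F c d n) a := by
  intro h
  have homega : (ω : QuadraticAlgebra F d c) = algebraMap F _ a := by
    rw [← toQuadraticAlgebra_T i, h, AlgHom.commutes]
  simpa using congrArg QuadraticAlgebra.im homega

theorem T_ne_zero (i : Fin (n - 1)) : T F c d n i ≠ 0 := by
  simpa using T_ne_algebraMap i (0 : F)

end Generators

end HeckeLikeTower

/-- for `n ≥ 2` and a generator `T_i` of `B_n`: `T_i` is a unit iff `d ≠ 0`;
if `d ≠ 0` then `T_i⁻¹ = d⁻¹(T_i − c)`; and if `d = 0` then `T_i` is a nonzero zero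
divisor. -/
theorem heckeLike_unit_iff (F : Type*) [Field F] (c d : F) (n : ℕ) (hn : 2 ≤ n)
    (i : Fin (n - 1)) :
    (IsUnit (T F c d n i) ↔ d ≠ 0) ∧
    (d ≠ 0 →
      T F c d n i * (d⁻¹ • (T F c d n i - algebraMap F (B F c d n) c)) = 1 ∧
      (d⁻¹ • (T F c d n i - algebraMap F (B F c d n) c)) * T F c d n i = 1) ∧
    (d = 0 → T F c d n i ≠ 0 ∧
      ∃ b : B F c d n, b ≠ 0 ∧ T F c d n i * b = 0 ∧ b * T F c d n i = 0) := by
  have hquad := T_mul_self (c := c) (d := d) i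
  refine ⟨isUnit_iff_of_mul_self_eq hquad (T_ne_algebraMap i c), fun hd ↦ ?inverse, ?zeroDivisor⟩
  case inverse =>
    exact ⟨mul_inv_smul_sub_algebraMap_of_mul_self_eq hquad hd,
      inv_smul_sub_algebraMap_mul_of_mul_self_eq hquad hd⟩
  case zeroDivisor =>
    rintro rfl
    refine ⟨T_ne_zero i, T F c 0 n i - algebraMap F _ c,
      sub_ne_zero.mpr (T_ne_algebraMap i c), ?_, ?_⟩
    · rw [mul_sub_algebraMap_of_mul_self_eq hquad, map_zero]
    · rw [sub_algebraMap_mul_of_mul_self_eq hquad, map_zero]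
end

section
/- Let n, m, k, ℓ, N ∈ ℕ with n + m = k + ℓ = N, and let r ∈ ℕ satisfy max(0, n−ℓ) ≤ r ≤ min(n, k). Define w_r ∈ S_N by: w_r(i) = i for 1 ≤ i ≤ r; w_r(i) = i − r + k for r < i ≤ n; w_r(i) = i − n + r for n < i ≤ n + k − r; and w_r(i) = i for n + k − r < i ≤ N. Then in the Hecke-like algebra B_N the following relations hold: T_{w_r} T_i = T_i T_{w_r} whenever 1 ≤ i < r or n + k − r < i < N; T_{w_r} T_i = T_{i−r+k} T_{w_r} whenever r < i < n; and T_{w_r} T_i = T_{i−n+r} T_{w_r} whenever n < i < n + k − r. -/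
open scoped TensorProduct

open HeckeLikeTower

/-!
The argument takes place in the braid monoid. Lengths in `S_N` are computed by inversions, so right
multiplication by `s_i` raises the length exactly when `w i < w (i + 1)`. If `i` is a right descent
of `w`, the relations rewrite any reduced word of `w` into one ending in `i`. Matsumoto's theorem
follows: the product of the `T_i` along a reduced word depends only on the permutation. When `w`
sends `j, j + 1` to `p, p + 1`, in this order, one has `w s_j = s_p w`, and both sides have length
`ℓ(w) + 1`, whence `T_w T_j = T_p T_w`.
-/

namespace HeckeLikeTower

section AdjacentTranspositions

variable {N : ℕ}

/-- The smaller of the two points of `Fin N` moved by `s N i`. -/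
def lo (i : Fin (N - 1)) : Fin N := ⟨i, by omega⟩

/-- The larger of the two points of `Fin N` moved by `s N i`. -/
def hi (i : Fin (N - 1)) : Fin N := ⟨i + 1, by omega⟩

lemma val_lo (i : Fin (N - 1)) : (lo i : ℕ) = i := rfl

lemma val_hi (i : Fin (N - 1)) : (hi i : ℕ) = i + 1 := rfl

lemma lo_lt_hi (i : Fin (N - 1)) : lo i < hi i := Nat.lt_succ_self i

lemma val_s_apply (i : Fin (N - 1)) (x : Fin N) :
    (s N i x : ℕ) =
      if (x : ℕ) = i then (i : ℕ) + 1 else if (x : ℕ) = i + 1 then (i : ℕ) else x := by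
  simp only [s, Equiv.swap_apply_def, Fin.ext_iff, apply_ite Fin.val]

lemma s_eq_swap_s18 (i : Fin (N - 1)) : s N i = Equiv.swap (lo i) (hi i) := rfl

lemma s_lo (i : Fin (N - 1)) : s N i (lo i) = hi i := Equiv.swap_apply_left _ _

lemma s_hi (i : Fin (N - 1)) : s N i (hi i) = lo i := Equiv.swap_apply_right _ _

lemma s_mul_self (i : Fin (N - 1)) : s N i * s N i = 1 := Equiv.swap_mul_self _ _

lemma mul_s_mul_s (w : Equiv.Perm (Fin N)) (i : Fin (N - 1)) : w * s N i * s N i = w := by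
  rw [mul_assoc, s_mul_self, mul_one]

lemma s_involutive (i : Fin (N - 1)) : Function.Involutive (s N i) :=
  Equiv.Perm.ext_iff.1 (s_mul_self i)

lemma s_lt_s_s18 {i : Fin (N - 1)} {x y : Fin N} (hxy : x < y) (hne : ¬(x = lo i ∧ y = hi i)) :
    s N i x < s N i y := by
  simp only [Fin.ext_iff, val_lo, val_hi] at hne
  rw [Fin.lt_def] at hxy ⊢
  simp only [val_s_apply]
  split_ifs <;> omega

lemma mul_s_eq_s_mul {w : Equiv.Perm (Fin N)} {i j : Fin (N - 1)}
    (hlo : w (lo i) = lo j) (hhi : w (hi i) = hi j) : w * s N i = s N j * w := by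
  rw [s_eq_swap_s18, s_eq_swap_s18, ← hlo, ← hhi, Equiv.mul_swap_eq_swap_mul]

/-- The indices `i` and `j` differ by at least two. -/
def Far (i j : Fin (N - 1)) : Prop := (i : ℕ) + 1 < j ∨ (j : ℕ) + 1 < i

/-- The indices `i` and `j` differ by exactly one. -/
def Adjacent (i j : Fin (N - 1)) : Prop := (j : ℕ) = i + 1 ∨ (i : ℕ) = j + 1

lemma eq_or_far_or_adjacent (i j : Fin (N - 1)) : i = j ∨ Far i j ∨ Adjacent i j := by
  rw [Fin.ext_iff, Far, Adjacent]
  omega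

lemma Far.symm {i j : Fin (N - 1)} (h : Far i j) : Far j i := Or.symm h

lemma Far.s_lo {i j : Fin (N - 1)} (h : Far i j) : s N i (lo j) = lo j := by
  rw [Fin.ext_iff, val_s_apply, val_lo]
  split_ifs <;> grind [Far]

lemma Far.s_hi {i j : Fin (N - 1)} (h : Far i j) : s N i (hi j) = hi j := by
  rw [Fin.ext_iff, val_s_apply, val_hi]
  split_ifs <;> grind [Far]

lemma Far.s_mul_s {i j : Fin (N - 1)} (h : Far i j) : s N i * s N j = s N j * s N i :=
  mul_s_eq_s_mul h.s_lo h.s_hi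

lemma Adjacent.s_s_lo {i j : Fin (N - 1)} (h : Adjacent i j) : s N i (s N j (lo i)) = lo j := by
  simp only [Fin.ext_iff, val_s_apply, val_lo]
  split_ifs <;> grind [Adjacent]

lemma Adjacent.s_s_hi {i j : Fin (N - 1)} (h : Adjacent i j) : s N i (s N j (hi i)) = hi j := by
  simp only [Fin.ext_iff, val_s_apply, val_hi]
  split_ifs <;> grind [Adjacent]

lemma Adjacent.s_mul_s_mul_s {i j : Fin (N - 1)} (h : Adjacent i j) :
    s N i * s N j * s N i = s N j * s N i * s N j := by
  rw [mul_s_eq_s_mul (w := s N i * s N j) h.s_s_lo h.s_s_hi, mul_assoc]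

end AdjacentTranspositions

section BraidFamilies

variable {N : ℕ} {M : Type*} [Monoid M] {f : Fin (N - 1) → M}

/-- The family `f` satisfies the defining relations of the braid monoid on `N` strands. -/
structure IsBraidFamily (f : Fin (N - 1) → M) : Prop where
  comm {i j : Fin (N - 1)} : Far i j → f i * f j = f j * f i
  braid {i j : Fin (N - 1)} : Adjacent i j → f i * f j * f i = f j * f i * f j

lemma prod_map_concat {ι : Type*} (g : ι → M) (u : List ι) (i : ι) :
    ((u ++ [i]).map g).prod = (u.map g).prod * g i := by
  rw [List.map_append, List.prod_append, List.map_singleton, List.prod_singleton]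

lemma IsBraidFamily.prod_map_far (hf : IsBraidFamily f) {i j : Fin (N - 1)} (h : Far i j)
    (u : List (Fin (N - 1))) :
    ((u ++ [i] ++ [j]).map f).prod = ((u ++ [j] ++ [i]).map f).prod := by
  simp only [prod_map_concat, mul_assoc, hf.comm h]

lemma IsBraidFamily.prod_map_adjacent (hf : IsBraidFamily f) {i j : Fin (N - 1)}
    (h : Adjacent i j) (u : List (Fin (N - 1))) :
    ((u ++ [i] ++ [j] ++ [i]).map f).prod = ((u ++ [j] ++ [i] ++ [j]).map f).prod := by
  have h_braid := hf.braid h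
  simp only [mul_assoc] at h_braid
  simp only [prod_map_concat, mul_assoc, h_braid]

lemma isBraidFamily_s : IsBraidFamily (s N) :=
  ⟨Far.s_mul_s, Adjacent.s_mul_s_mul_s⟩

end BraidFamilies

section Inversions

variable {N : ℕ}

/-- The index `i` is a right descent of `w`, expressed through the values of `w` rather than
through lengths. -/
def IsDescent (w : Equiv.Perm (Fin N)) (i : Fin (N - 1)) : Prop := w (hi i) < w (lo i)

lemma not_isDescent_iff {w : Equiv.Perm (Fin N)} {i : Fin (N - 1)} :
    ¬IsDescent w i ↔ w (lo i) < w (hi i) := by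
  rw [IsDescent, not_lt, le_iff_lt_or_eq, or_iff_left (w.injective.ne (lo_lt_hi i).ne)]

lemma isDescent_mul_s_self {w : Equiv.Perm (Fin N)} {i : Fin (N - 1)} :
    IsDescent (w * s N i) i ↔ ¬IsDescent w i := by
  rw [not_isDescent_iff, IsDescent, Equiv.Perm.mul_apply, Equiv.Perm.mul_apply, s_lo, s_hi]

lemma Far.isDescent_mul_s {w : Equiv.Perm (Fin N)} {i j : Fin (N - 1)} (h : Far i j) :
    IsDescent (w * s N i) j ↔ IsDescent w j := by
  simp only [IsDescent, Equiv.Perm.mul_apply, h.s_lo, h.s_hi]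

lemma Adjacent.isDescent_mul_s_mul_s {w : Equiv.Perm (Fin N)} {i j : Fin (N - 1)}
    (h : Adjacent i j) : IsDescent (w * s N i * s N j) i ↔ IsDescent w j := by
  simp only [IsDescent, Equiv.Perm.mul_apply, h.s_s_lo, h.s_s_hi]

lemma Adjacent.isDescent_mul_s {w : Equiv.Perm (Fin N)} {i j : Fin (N - 1)} (h : Adjacent i j)
    (h_i : IsDescent w i) (h_j : IsDescent w j) : IsDescent (w * s N i) j := by
  rw [IsDescent] at h_i h_j ⊢
  rw [Equiv.Perm.mul_apply, Equiv.Perm.mul_apply]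
  rcases h with h | h
  · have h_shared : lo j = hi i := Fin.ext h
    have h_fixed : s N i (hi j) = hi j := by
      rw [Fin.ext_iff, val_s_apply, val_hi]
      split_ifs <;> omega
    rw [h_shared] at h_j ⊢
    rw [h_fixed, s_hi]
    exact h_j.trans h_i
  · have h_shared : hi j = lo i := Fin.ext h.symm
    have h_fixed : s N i (lo j) = lo j := by
      rw [Fin.ext_iff, val_s_apply, val_lo]
      split_ifs <;> omega
    rw [h_shared] at h_j ⊢
    rw [h_fixed, s_lo]
    exact h_i.trans h_j

lemma eq_one_of_forall_not_isDescent {w : Equiv.Perm (Fin N)} (h : ∀ i, ¬IsDescent w i) :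
    w = 1 := by
  cases N with
  | zero => exact Subsingleton.elim _ _
  | succ n =>
    have hw : StrictMono w := Fin.strictMono_iff_lt_succ.2 fun i => not_isDescent_iff.1 (h i)
    have h_range : Set.range w = Set.range id := by rw [w.surjective.range_eq, Set.range_id]
    exact DFunLike.coe_injective ((hw.range_inj strictMono_id).1 h_range)

/-- The inversions of `w`, as pairs of positions. -/
def inversions (w : Equiv.Perm (Fin N)) : Finset (Fin N × Fin N) :=
  {p | p.1 < p.2 ∧ w p.2 < w p.1}

lemma mem_inversions {w : Equiv.Perm (Fin N)} {x y : Fin N} :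
    (x, y) ∈ inversions w ↔ x < y ∧ w y < w x := by
  simp only [inversions, Finset.mem_filter, Finset.mem_univ, true_and]

lemma inversions_one : inversions (1 : Equiv.Perm (Fin N)) = ∅ :=
  Finset.filter_false_of_mem fun _ _ h => h.1.asymm h.2

lemma inversions_mul_s {w : Equiv.Perm (Fin N)} {i : Fin (N - 1)} (h : ¬IsDescent w i) :
    inversions (w * s N i) = insert (lo i, hi i)
      ((inversions w).map ((s N i).prodCongr (s N i)).toEmbedding) := by
  rw [not_isDescent_iff] at h
  ext ⟨x, y⟩
  have h_map : (x, y) ∈ (inversions w).map ((s N i).prodCongr (s N i)).toEmbedding ↔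
      s N i x < s N i y ∧ w (s N i y) < w (s N i x) := by
    rw [← mem_inversions, Finset.mem_map_equiv]
    rfl
  rw [Finset.mem_insert, h_map, mem_inversions, Prod.mk.injEq]
  constructor
  · rintro ⟨hxy, hw⟩
    exact or_iff_not_imp_left.2 fun hne => ⟨s_lt_s_s18 hxy hne, hw⟩
  · rintro (⟨rfl, rfl⟩ | ⟨hxy, hw⟩)
    · refine ⟨lo_lt_hi i, ?_⟩
      rwa [Equiv.Perm.mul_apply, Equiv.Perm.mul_apply, s_lo, s_hi]
    · refine ⟨?_, hw⟩
      have hne : ¬(s N i x = lo i ∧ s N i y = hi i) := by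
        rintro ⟨hx, hy⟩
        rw [hx, hy] at hw
        exact h.asymm hw
      simpa only [s_involutive i _] using s_lt_s_s18 hxy hne

lemma card_inversions_mul_s_of_not_isDescent {w : Equiv.Perm (Fin N)} {i : Fin (N - 1)}
    (h : ¬IsDescent w i) : (inversions (w * s N i)).card = (inversions w).card + 1 := by
  rw [inversions_mul_s h, Finset.card_insert_of_notMem, Finset.card_map]
  rw [Finset.mem_map_equiv]
  intro h_mem
  have h_lt : s N i (lo i) < s N i (hi i) := (mem_inversions.1 h_mem).1
  rw [s_lo, s_hi] at h_lt
  exact h_lt.asymm (lo_lt_hi i)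

lemma card_inversions_mul_s_of_isDescent {w : Equiv.Perm (Fin N)} {i : Fin (N - 1)}
    (h : IsDescent w i) : (inversions (w * s N i)).card + 1 = (inversions w).card := by
  have h_asc : ¬IsDescent (w * s N i) i := fun h' => isDescent_mul_s_self.1 h' h
  rw [← card_inversions_mul_s_of_not_isDescent h_asc, mul_s_mul_s]

end Inversions

section ReducedWords

variable {N : ℕ}

lemma wordProd_concat (u : List (Fin (N - 1))) (i : Fin (N - 1)) :
    wordProd N (u ++ [i]) = wordProd N u * s N i :=
  prod_map_concat (s N) u i

lemma card_inversions_wordProd_le (u : List (Fin (N - 1))) :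
    (inversions (wordProd N u)).card ≤ u.length := by
  induction u using List.reverseRecOn with
  | nil => exact (Finset.card_eq_zero.2 inversions_one).le
  | append_singleton u i ih =>
    rw [wordProd_concat, List.length_append, List.length_singleton]
    by_cases h : IsDescent (wordProd N u) i
    · have := card_inversions_mul_s_of_isDescent h
      omega
    · have := card_inversions_mul_s_of_not_isDescent h
      omega

lemma exists_wordProd_eq_length_eq (w : Equiv.Perm (Fin N)) :
    ∃ u, wordProd N u = w ∧ u.length = (inversions w).card := by
  induction hn : (inversions w).card generalizing w with
  | zero =>
    refine ⟨[], (eq_one_of_forall_not_isDescent fun i h => ?_).symm, rfl⟩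
    have := card_inversions_mul_s_of_isDescent h
    omega
  | succ n ih =>
    obtain ⟨i, h⟩ : ∃ i, IsDescent w i := by
      by_contra! h
      rw [eq_one_of_forall_not_isDescent h, inversions_one, Finset.card_empty] at hn
      omega
    have h_card := card_inversions_mul_s_of_isDescent h
    obtain ⟨u, hu, hu_len⟩ := ih (w * s N i) (by omega)
    refine ⟨u ++ [i], ?_, ?_⟩
    · rw [wordProd_concat, hu, mul_s_mul_s]
    · rw [List.length_append, List.length_singleton, hu_len]

lemma isReducedWord_iff {w : Equiv.Perm (Fin N)} {u : List (Fin (N - 1))} :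
    IsReducedWord N w u ↔ wordProd N u = w ∧ u.length = (inversions w).card := by
  refine and_congr_right fun hu => ⟨fun h_min => ?_, fun h_len v hv => ?_⟩
  · obtain ⟨v, hv, hv_len⟩ := exists_wordProd_eq_length_eq w
    exact le_antisymm (hv_len ▸ h_min v hv) (hu ▸ card_inversions_wordProd_le u)
  · rw [h_len, ← hv]
    exact card_inversions_wordProd_le v

lemma isReducedWord_concat_iff {w : Equiv.Perm (Fin N)} {u : List (Fin (N - 1))}
    {i : Fin (N - 1)} :
    IsReducedWord N w (u ++ [i]) ↔ IsDescent w i ∧ IsReducedWord N (w * s N i) u := by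
  have h_prod : wordProd N u * s N i = w ↔ wordProd N u = w * s N i := by
    constructor
    · rintro rfl
      rw [mul_s_mul_s]
    · intro h
      rw [h, mul_s_mul_s]
  rw [isReducedWord_iff, isReducedWord_iff, wordProd_concat, h_prod, List.length_append,
    List.length_singleton, and_left_comm]
  refine and_congr_right fun hu => ?_
  have h_le := hu ▸ card_inversions_wordProd_le u
  by_cases h : IsDescent w i
  · have := card_inversions_mul_s_of_isDescent h
    simp only [h, true_and]
    omega
  · have := card_inversions_mul_s_of_not_isDescent h
    simp only [h, false_and, iff_false]
    omega

lemma IsReducedWord.of_wordProd_eq {w : Equiv.Perm (Fin N)} {u v : List (Fin (N - 1))}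
    (hu : IsReducedWord N w u) (h_prod : wordProd N v = wordProd N u)
    (h_len : v.length = u.length) : IsReducedWord N w v :=
  ⟨h_prod.trans hu.1, h_len ▸ hu.2⟩

lemma IsReducedWord.swap_far {w : Equiv.Perm (Fin N)} {u : List (Fin (N - 1))}
    {i j : Fin (N - 1)} (hu : IsReducedWord N w (u ++ [i] ++ [j])) (h : Far i j) :
    IsReducedWord N w (u ++ [j] ++ [i]) :=
  hu.of_wordProd_eq (isBraidFamily_s.prod_map_far h u).symm
    (by simp only [List.length_append, List.length_singleton])

lemma IsReducedWord.swap_adjacent {w : Equiv.Perm (Fin N)} {u : List (Fin (N - 1))}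
    {i j : Fin (N - 1)} (hu : IsReducedWord N w (u ++ [i] ++ [j] ++ [i])) (h : Adjacent i j) :
    IsReducedWord N w (u ++ [j] ++ [i] ++ [j]) :=
  hu.of_wordProd_eq (isBraidFamily_s.prod_map_adjacent h u).symm
    (by simp only [List.length_append, List.length_singleton])

lemma IsReducedWord.length_eq {w : Equiv.Perm (Fin N)} {u v : List (Fin (N - 1))}
    (hu : IsReducedWord N w u) (hv : IsReducedWord N w v) : u.length = v.length :=
  le_antisymm (hu.2 v hv.1) (hv.2 u hu.1)

end ReducedWords

section Matsumoto

variable {N : ℕ} {M : Type*} [Monoid M] {f : Fin (N - 1) → M}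

lemma IsBraidFamily.exists_isReducedWord_concat (hf : IsBraidFamily f)
    {w : Equiv.Perm (Fin N)} {u : List (Fin (N - 1))} (hu : IsReducedWord N w u)
    {i : Fin (N - 1)} (h_i : IsDescent w i) :
    ∃ v, IsReducedWord N w (v ++ [i]) ∧ (u.map f).prod = ((v ++ [i]).map f).prod := by
  induction hn : u.length using Nat.strong_induction_on generalizing w u i with
  | _ n ih =>
  obtain rfl | ⟨u, j, rfl⟩ := List.eq_nil_or_concat' u
  · obtain rfl : 1 = w := hu.1
    exact absurd h_i (lo_lt_hi i).asymm
  obtain ⟨h_j, hu'⟩ := isReducedWord_concat_iff.1 hu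
  rw [List.length_append, List.length_singleton] at hn
  obtain rfl | h_far | h_adj := eq_or_far_or_adjacent j i
  · exact ⟨u, hu, rfl⟩
  · obtain ⟨v, hv, huv⟩ := ih u.length (by omega) hu' (h_far.isDescent_mul_s.2 h_i) rfl
    have h_vij : IsReducedWord N w (v ++ [i] ++ [j]) := isReducedWord_concat_iff.2 ⟨h_j, hv⟩
    refine ⟨v ++ [j], h_vij.swap_far h_far.symm, ?_⟩
    rw [prod_map_concat, huv, ← prod_map_concat, hf.prod_map_far h_far]
  · -- The word `u j` is rewritten to `v i j`, then to `x j i j`, and finally to `x i j i`.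
    obtain ⟨v, hv, huv⟩ := ih u.length (by omega) hu' (h_adj.isDescent_mul_s h_j h_i) rfl
    obtain ⟨h_ji, hv'⟩ := isReducedWord_concat_iff.1 hv
    have h_len := hv.length_eq hu'
    rw [List.length_append, List.length_singleton] at h_len
    obtain ⟨x, hx, hvx⟩ := ih v.length (by omega) hv' (h_adj.isDescent_mul_s_mul_s.2 h_i) rfl
    have h_xjij : IsReducedWord N w (x ++ [j] ++ [i] ++ [j]) :=
      isReducedWord_concat_iff.2 ⟨h_j, isReducedWord_concat_iff.2 ⟨h_ji, hx⟩⟩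
    refine ⟨x ++ [i] ++ [j], h_xjij.swap_adjacent h_adj, ?_⟩
    rw [prod_map_concat, huv, prod_map_concat, hvx, ← prod_map_concat, ← prod_map_concat,
      hf.prod_map_adjacent h_adj]

/-- Matsumoto's theorem for the symmetric group. -/
theorem IsBraidFamily.prod_map_eq_of_isReducedWord (hf : IsBraidFamily f)
    {w : Equiv.Perm (Fin N)} {u v : List (Fin (N - 1))} (hu : IsReducedWord N w u)
    (hv : IsReducedWord N w v) : (u.map f).prod = (v.map f).prod := by
  induction u using List.reverseRecOn generalizing w v with
  | nil => rw [List.eq_nil_of_length_eq_zero (hv.length_eq hu)]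
  | append_singleton u i ih =>
    obtain ⟨h_i, hu'⟩ := isReducedWord_concat_iff.1 hu
    obtain ⟨x, hx, hvx⟩ := hf.exists_isReducedWord_concat hv h_i
    obtain ⟨-, hx'⟩ := isReducedWord_concat_iff.1 hx
    rw [hvx, prod_map_concat, prod_map_concat, ih hu' hx']

theorem IsBraidFamily.prod_map_mul_eq_mul_prod_map (hf : IsBraidFamily f)
    {w : Equiv.Perm (Fin N)} {u : List (Fin (N - 1))} (hu : IsReducedWord N w u)
    {i j : Fin (N - 1)} (hlo : w (lo i) = lo j) (hhi : w (hi i) = hi j) :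
    (u.map f).prod * f i = f j * (u.map f).prod := by
  have h_asc : ¬IsDescent w i := by
    rw [not_isDescent_iff, hlo, hhi]
    exact lo_lt_hi j
  have hui : IsReducedWord N (w * s N i) (u ++ [i]) :=
    isReducedWord_concat_iff.2 ⟨isDescent_mul_s_self.2 h_asc, by rwa [mul_s_mul_s]⟩
  have h_prod : wordProd N (j :: u) = wordProd N (u ++ [i]) := by
    rw [wordProd_concat, hu.1, mul_s_eq_s_mul hlo hhi, ← hu.1]
    exact List.prod_cons
  have hju : IsReducedWord N (w * s N i) (j :: u) :=
    hui.of_wordProd_eq h_prod (by rw [List.length_append, List.length_singleton, List.length_cons])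
  rw [← prod_map_concat, hf.prod_map_eq_of_isReducedWord hui hju, List.map_cons, List.prod_cons]

end Matsumoto

section HeckeLikeAlgebra

variable (F : Type*) [Field F] (c d : F) {N : ℕ}

lemma T_mul_T_of_succ_lt {i j : Fin (N - 1)} (h : (i : ℕ) + 1 < j) :
    T F c d N i * T F c d N j = T F c d N j * T F c d N i := by
  simpa only [T, map_mul] using RingQuot.mkAlgHom_rel F (Rel.comm (c := c) (d := d) i j h)

lemma T_mul_T_mul_T_of_eq_succ {i j : Fin (N - 1)} (h : (j : ℕ) = i + 1) :
    T F c d N i * T F c d N j * T F c d N i = T F c d N j * T F c d N i * T F c d N j := by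
  simpa only [T, map_mul] using RingQuot.mkAlgHom_rel F (Rel.braid (c := c) (d := d) i j h)

lemma isBraidFamily_T : IsBraidFamily (T F c d N) where
  comm h := h.elim (T_mul_T_of_succ_lt F c d) fun h' => (T_mul_T_of_succ_lt F c d h').symm
  braid h :=
    h.elim (T_mul_T_mul_T_of_eq_succ F c d) fun h' => (T_mul_T_mul_T_of_eq_succ F c d h').symm

theorem Tword_mul_T {w : Equiv.Perm (Fin N)} {u : List (Fin (N - 1))}
    (hu : IsReducedWord N w u) {i j : Fin (N - 1)} (hlo : (w (lo i) : ℕ) = j)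
    (hhi : (w (hi i) : ℕ) = j + 1) :
    Tword F c d N u * T F c d N i = T F c d N j * Tword F c d N u :=
  (isBraidFamily_T F c d).prod_map_mul_eq_mul_prod_map hu (Fin.ext hlo) (Fin.ext hhi)

end HeckeLikeAlgebra

end HeckeLikeTower

/-- let `n + m = k + l = N` and `max(0, n−l) ≤ r ≤ min(n, k)`, and let
`w_r ∈ S_N` be defined piecewise as in the paper (`0`-based here: `w i = i` for `i < r`;
`(w i) = i − r + k` for `r ≤ i < n`; `(w i) = i − n + r` for `n ≤ i < n + k − r`; `w i = i`
otherwise).  Then in `B_N`: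
`T_{w_r} T_i = T_i T_{w_r}` for `1 ≤ i < r` or `n+k−r < i < N`;
`T_{w_r} T_i = T_{i−r+k} T_{w_r}` for `r < i < n`; and
`T_{w_r} T_i = T_{i−n+r} T_{w_r}` for `n < i < n+k−r`.
(The generator `T_i`, `1 ≤ i ≤ N−1`, is `T F c d N j` with `i = j + 1`.) -/
theorem heckeLike_Twr_comm (F : Type*) [Field F] (c d : F) (n m k l N r : ℕ)
    (hnm : n + m = N) (hkl : k + l = N)
    (hr₁ : n - l ≤ r) (hr₂ : r ≤ n) (hr₃ : r ≤ k)
    (w : Equiv.Perm (Fin N))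
    (hw : ∀ i : Fin N,
      ((i : ℕ) < r → w i = i) ∧
      (r ≤ (i : ℕ) → (i : ℕ) < n → ((w i : ℕ) = (i : ℕ) - r + k)) ∧
      (n ≤ (i : ℕ) → (i : ℕ) < n + k - r → ((w i : ℕ) = (i : ℕ) - n + r)) ∧
      (n + k - r ≤ (i : ℕ) → w i = i))
    (lw : List (Fin (N - 1))) (hlw : IsReducedWord N w lw) :
    (∀ j : Fin (N - 1), (j : ℕ) + 1 < r ∨ n + k - r < (j : ℕ) + 1 →
      Tword F c d N lw * T F c d N j = T F c d N j * Tword F c d N lw) ∧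
    (∀ (j : Fin (N - 1)) (hj₁ : r < (j : ℕ) + 1) (hj₂ : (j : ℕ) + 1 < n),
      Tword F c d N lw * T F c d N j =
        T F c d N ⟨(j : ℕ) + k - r, by have := j.isLt; omega⟩ * Tword F c d N lw) ∧
    (∀ (j : Fin (N - 1)) (hj₁ : n < (j : ℕ) + 1) (hj₂ : (j : ℕ) + 1 < n + k - r),
      Tword F c d N lw * T F c d N j =
        T F c d N ⟨(j : ℕ) + r - n, by have := j.isLt; omega⟩ * Tword F c d N lw) := by
  refine ⟨fun j hj => Tword_mul_T F c d hlw ?_ ?_,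
    fun j hj₁ hj₂ => Tword_mul_T F c d hlw ?_ ?_,
    fun j hj₁ hj₂ => Tword_mul_T F c d hlw ?_ ?_⟩ <;>
  grind [val_lo, val_hi]
end
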